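/- There exist absolute constants c₁, c₂ > 0 such that for every positive integer N (h = 1/N) and every vector (φ₀,…,φ_{N−1}) ∈ ℂ^N, setting φ_h = Σ_{j=0}^{N−1} φ_j χ_j, φ̄ = h Σ_{j=0}^{N−1} φ_j (the mean value of φ_h), and M(φ_h) = sup { | Σ_{j=0}^{N−1} (φ_j − φ_{j−1}) u(s_j) + φ̄ · h Σ_{j=0}^{N−1} u(s_j) | : u C^∞ and 1-periodic with ‖u‖₁ ≤ 1 } (indices understood modulo N; M(φ_h) is the H^{−1} norm of the distribution φ_h′ + φ̂_h(0) d_h, where d_h = h Σ_j δ_{s_j}), one has c₁ M(φ_h) ≤ ‖φ_h‖₀ ≤ c₂ M(φ_h). -/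

import Mathlib

/-!
Write `F(u) = ∑ (φ_j - φ_{j-1}) u(s_j) + φ̄ h ∑ u(s_j)`.

*Upper bound for `F`.* Summation by parts turns the first sum into `-∑ φ_j (u(s_{j+1}) - u(s_j))`.
With `D` the derivative, by Cauchy–Schwarz on each cell the squared increments sum to at most `h ‖Du‖₀²`, and Parseval gives
`‖Du‖₀ ≤ 2π ‖u‖₁`. The mean term is controlled by `|φ̄| ≤ ‖φ_h‖₀` and the Sobolev embedding
`sup |u| ≤ (1 + 2π) ‖u‖₁`. Hence `M(φ_h) ≤ (4π + 1) ‖φ_h‖₀` (`gridPairing_le`).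

*Lower bound for `M`.* For the mode `e_m(s) = e^{2πims}` with `0 < |m| ≤ N/2` the grid values sum
to zero and `|F(e_m)| = |1 - e^{2πim/N}| |P_m| ≥ (4|m|/N) |P_m|`, where `P_m = ∑ φ_j e^{2πijm/N}`;
also `F(e_0) = P_0 / N`. With `w_0 = 1` and `w_m = |m|` otherwise, the trigonometric polynomial with
coefficients `conj F(e_m) / w_m²`, normalised in `‖·‖₁`, gives
`M(φ_h)² ≥ ∑ |F(e_m)|² / w_m² ≥ N⁻² ∑ |P_m|² = ‖φ_h‖₀²`, the last step being Parseval's identity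
on `ℤ/N` (`exists_test`).
-/


noncomputable section

/-- Smooth kernel data, 1-periodic in each variable. -/
def SPK (A : ℝ → ℝ → ℂ) : Prop :=
  ContDiff ℝ (⊤ : ℕ∞) (fun p : ℝ × ℝ => A p.1 p.2) ∧
    (∀ s t, A (s + 1) t = A s t) ∧ (∀ s t, A s (t + 1) = A s t)

/-- Logarithmic kernel `V(s,t) = (i/(2π)) A(s,t) log(sin²(π(s−t))) + K(s,t)`. -/
def logKer (A K : ℝ → ℝ → ℂ) (s t : ℝ) : ℂ :=
  Complex.I / (2 * Real.pi) * A s t * (Real.log (Real.sin (Real.pi * (s - t)) ^ 2) : ℂ) + K s t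

/-- Grid point `s_{j+ε} = (j − 1/2 + ε)h`. -/
def sg (h ε : ℝ) (j : ℤ) : ℝ := ((j : ℝ) - 1 / 2 + ε) * h

/-- Grid point `t_{j+ε} = (j + ε)h`. -/
def tg (h ε : ℝ) (j : ℤ) : ℝ := ((j : ℝ) + ε) * h

/-- Integral operator with kernel `V`. -/
def Vop (V : ℝ → ℝ → ℂ) (φ : ℝ → ℂ) (s : ℝ) : ℂ := ∫ t in (0:ℝ)..1, V s t * φ t

/-- Hypersingular operator `W = −D V₁ D + V₂`. -/
def Wop (V1 V2 : ℝ → ℝ → ℂ) (φ : ℝ → ℂ) (s : ℝ) : ℂ :=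
  -deriv (Vop V1 (deriv φ)) s + Vop V2 φ s

/-- Nyström matrix entries `W^ε_{ij}`. -/
def Wmat (V1 V2 : ℝ → ℝ → ℂ) (h ε : ℝ) (i j : ℤ) : ℂ :=
  V1 (sg h ε (i + 1)) (sg h 0 (j + 1)) - V1 (sg h ε i) (sg h 0 (j + 1))
    - V1 (sg h ε (i + 1)) (sg h 0 j) + V1 (sg h ε i) (sg h 0 j)
    + (h : ℂ) ^ 2 * V2 (tg h ε i) (tg h 0 j)

/-- Fourier coefficient of a 1-periodic function. -/
def fc (u : ℝ → ℂ) (m : ℤ) : ℂ :=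
  ∫ t in (0:ℝ)..1, u t * Complex.exp (-(2 * Real.pi * Complex.I * (m : ℂ) * (t : ℂ)))

/-- Periodic Sobolev norm of order `r`. -/
def sobNorm (r : ℝ) (u : ℝ → ℂ) : ℝ :=
  Real.sqrt (‖fc u 0‖ ^ 2 +
    ∑' m : ℤ, if m = 0 then 0 else |(m : ℝ)| ^ (2 * r) * ‖fc u m‖ ^ 2)

/-- 1-periodic step function on the ε-shifted grid with coefficients `v`. -/
def stepf (N : ℕ) (ε : ℝ) (v : ZMod N → ℂ) (s : ℝ) : ℂ :=
  v ((⌊s * N + 1 / 2 - ε⌋ : ℤ) : ZMod N)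

/-- Midpoint quadrature error matrix entries `E^ε_{ij}`. -/
def Emat (V2 : ℝ → ℝ → ℂ) (h ε : ℝ) (i j : ℤ) : ℂ :=
  (∫ s in (sg h ε i)..(sg h ε (i + 1)), ∫ t in (sg h 0 j)..(sg h 0 (j + 1)), V2 s t)
    - (h : ℂ) ^ 2 * V2 (tg h ε i) (tg h 0 j)

/-- Spectral (ℓ²-operator) norm of a complex `N×N` matrix. -/
def specNorm {N : ℕ} (M : Matrix (Fin N) (Fin N) ℂ) : ℝ :=
  ‖LinearMap.toContinuousLinearMap (Matrix.toEuclideanLin M)‖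

/-- The function `C̄₁(t) = −(1/(2πi)) log(4 sin²(πt))`. -/
def Cbar1 (t : ℝ) : ℂ :=
  -(1 / (2 * Real.pi * Complex.I)) * (Real.log (4 * Real.sin (Real.pi * t) ^ 2) : ℂ)

end

noncomputable section

/-! ### Grid values, Fourier modes and trigonometric polynomials -/

/-- The values of `u` at the grid points `s_j`, indexed by residues modulo `N`. -/
def gridSample (N : ℕ) (u : ℝ → ℂ) (j : ZMod N) : ℂ :=
  u (sg (1 / (N : ℝ)) 0 ((j.val : ℕ) : ℤ))

/-- The distribution `φ_h′ + φ̄ d_h` applied to a function with grid values `v`. -/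
def gridPairing (N : ℕ) [NeZero N] (φ v : ZMod N → ℂ) : ℂ :=
  (∑ j : ZMod N, (φ j - φ (j - 1)) * v j)
    + ((1 / (N : ℂ)) * ∑ j : ZMod N, φ j) * ((1 / (N : ℂ)) * ∑ j : ZMod N, v j)

/-- The Fourier mode `e^{2πims}`. -/
def mode (m : ℤ) (s : ℝ) : ℂ := Complex.exp (2 * Real.pi * Complex.I * (m : ℂ) * (s : ℂ))

/-- Trigonometric polynomial with one frequency, that of least absolute value, in each residue
class modulo `N`. -/
def trigPoly (N : ℕ) [NeZero N] (a : ZMod N → ℂ) (s : ℝ) : ℂ :=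
  ∑ k : ZMod N, a k * mode k.valMinAbs s

/-- Square root of the weight of the frequency `k.valMinAbs` in `‖·‖₁²`. -/
def modeWeight (N : ℕ) (k : ZMod N) : ℝ := if k = 0 then 1 else |(k.valMinAbs : ℝ)|

/-- Discrete Fourier sum `∑ φ_j e^{2πijk/N}`. -/
def dsum (N : ℕ) [NeZero N] (φ : ZMod N → ℂ) (k : ZMod N) : ℂ :=
  ∑ j : ZMod N, φ j * ZMod.stdAddChar (k * j)

lemma modeWeight_pos (N : ℕ) (k : ZMod N) : 0 < modeWeight N k := by
  unfold modeWeight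
  split_ifs with h
  · norm_num
  · rw [abs_pos]
    exact_mod_cast fun h' => h ((ZMod.valMinAbs_eq_zero k).1 h')

lemma mode_contDiff (m : ℤ) : ContDiff ℝ (⊤ : ℕ∞) (mode m) := by
  unfold mode
  have : ContDiff ℝ (⊤ : ℕ∞) (fun s : ℝ => (s : ℂ)) := Complex.ofRealCLM.contDiff
  fun_prop

lemma mode_periodic (m : ℤ) : Function.Periodic (mode m) 1 := by
  intro s
  unfold mode
  rw [Complex.exp_eq_exp_iff_exists_int]
  refine ⟨m, ?_⟩
  push_cast
  ring

lemma trigPoly_contDiff (N : ℕ) [NeZero N] (a : ZMod N → ℂ) :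
    ContDiff ℝ (⊤ : ℕ∞) (trigPoly N a) := by
  unfold trigPoly
  exact ContDiff.sum fun k _ => contDiff_const.mul (mode_contDiff _)

lemma trigPoly_periodic (N : ℕ) [NeZero N] (a : ZMod N → ℂ) :
    Function.Periodic (trigPoly N a) 1 := by
  intro s
  unfold trigPoly
  exact Finset.sum_congr rfl fun k _ => by rw [mode_periodic]

lemma fc_mode (m n : ℤ) : fc (mode m) n = if m = n then 1 else 0 := by
  have h1 : ∀ t : ℝ, mode m t * Complex.exp (-(2 * Real.pi * Complex.I * (n : ℂ) * (t : ℂ)))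
      = Complex.exp ((2 * Real.pi * Complex.I * ((m - n : ℤ) : ℂ)) * (t : ℂ)) := by
    intro t
    rw [mode, ← Complex.exp_add]
    congr 1
    push_cast
    ring
  unfold fc
  simp_rw [h1]
  split_ifs with h
  · simp [h]
  · have hmn : ((m - n : ℤ) : ℂ) ≠ 0 := by exact_mod_cast sub_ne_zero.2 h
    rw [integral_exp_mul_complex (mul_ne_zero Complex.two_pi_I_ne_zero hmn)]
    have : Complex.exp (2 * Real.pi * Complex.I * ((m - n : ℤ) : ℂ) * (1 : ℝ)) = 1 := by
      rw [Complex.exp_eq_one_iff]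
      exact ⟨m - n, by push_cast; ring⟩
    rw [this]
    simp

lemma fc_trigPoly (N : ℕ) [NeZero N] (a : ZMod N → ℂ) (n : ℤ) :
    fc (trigPoly N a) n = ∑ k : ZMod N, if k.valMinAbs = n then a k else 0 := by
  have h : fc (trigPoly N a) n = ∑ k : ZMod N, a k * fc (mode k.valMinAbs) n := by
    unfold fc trigPoly
    simp_rw [Finset.sum_mul]
    rw [intervalIntegral.integral_finsetSum]
    · refine Finset.sum_congr rfl fun k _ => ?_
      rw [← intervalIntegral.integral_const_mul]
      simp_rw [mul_assoc]
    · intro k _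
      apply Continuous.intervalIntegrable
      have := (mode_contDiff k.valMinAbs).continuous
      fun_prop
  rw [h]
  exact Finset.sum_congr rfl fun k _ => by rw [fc_mode]; split_ifs <;> simp

lemma fc_trigPoly_valMinAbs (N : ℕ) [NeZero N] (a : ZMod N → ℂ) (k : ZMod N) :
    fc (trigPoly N a) k.valMinAbs = a k := by
  rw [fc_trigPoly]
  simp [ZMod.injective_valMinAbs.eq_iff]

lemma sobNorm_trigPoly (N : ℕ) [NeZero N] (a : ZMod N → ℂ) :
    sobNorm 1 (trigPoly N a) = Real.sqrt (∑ k, modeWeight N k ^ 2 * ‖a k‖ ^ 2) := by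
  unfold sobNorm
  congr 1
  rw [tsum_eq_sum (s := Finset.univ.image (ZMod.valMinAbs : ZMod N → ℤ)),
    Finset.sum_image (fun x _ y _ h => ZMod.injective_valMinAbs h)]
  · have h0 : fc (trigPoly N a) 0 = a 0 := by
      have := fc_trigPoly_valMinAbs N a 0
      rwa [ZMod.valMinAbs_zero] at this
    have h1 : ‖a 0‖ ^ 2 = ∑ k : ZMod N, if k = 0 then ‖a k‖ ^ 2 else 0 := by simp
    rw [h0, h1, ← Finset.sum_add_distrib]
    refine Finset.sum_congr rfl fun k _ => ?_
    rw [fc_trigPoly_valMinAbs]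
    by_cases hk : k = 0
    · simp [hk, modeWeight]
    · have : k.valMinAbs ≠ 0 := fun h' => hk ((ZMod.valMinAbs_eq_zero k).1 h')
      simp only [hk, this, modeWeight, if_false, zero_add]
      norm_num
  · intro n hn
    have : fc (trigPoly N a) n = 0 := by
      rw [fc_trigPoly]
      refine Finset.sum_eq_zero fun k _ => if_neg fun h => hn ?_
      exact Finset.mem_image.2 ⟨k, Finset.mem_univ _, h⟩
    simp [this]

lemma gridPairing_trigPoly (N : ℕ) [NeZero N] (φ a : ZMod N → ℂ) :
    gridPairing N φ (gridSample N (trigPoly N a))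
      = ∑ k, a k * gridPairing N φ (gridSample N (mode k.valMinAbs)) := by
  unfold gridPairing gridSample trigPoly
  simp_rw [mul_add, Finset.sum_add_distrib, Finset.mul_sum]
  congr 1
  · rw [Finset.sum_comm]
    exact Finset.sum_congr rfl fun k _ => Finset.sum_congr rfl fun j _ => by ring
  · rw [Finset.sum_comm]
    exact Finset.sum_congr rfl fun k _ => Finset.sum_congr rfl fun j _ => by ring

/-! ### Lower bound for the dual norm -/

lemma gridSample_mode (N : ℕ) [NeZero N] (k j : ZMod N) :
    gridSample N (mode k.valMinAbs) j
      = Complex.exp (((-(Real.pi * k.valMinAbs / N) : ℝ) : ℂ) * Complex.I)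
          * ZMod.stdAddChar (k * j) := by
  have hN : (N : ℂ) ≠ 0 := by exact_mod_cast NeZero.ne N
  have h : k * j = ((k.valMinAbs * (j.val : ℤ) : ℤ) : ZMod N) := by simp
  rw [h, ZMod.stdAddChar_coe, ← Complex.exp_add]
  unfold gridSample mode sg
  congr 1
  push_cast
  field_simp
  ring

lemma gridPairing_mode (N : ℕ) [NeZero N] (φ : ZMod N → ℂ) (k : ZMod N) (hk : k ≠ 0) :
    gridPairing N φ (gridSample N (mode k.valMinAbs))
      = Complex.exp (((-(Real.pi * k.valMinAbs / N) : ℝ) : ℂ) * Complex.I)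
          * ((1 - ZMod.stdAddChar k) * dsum N φ k) := by
  unfold gridPairing
  simp_rw [gridSample_mode]
  set c := Complex.exp (((-(Real.pi * k.valMinAbs / N) : ℝ) : ℂ) * Complex.I)
  have h0 : ∑ j : ZMod N, c * ZMod.stdAddChar (k * j) = 0 := by
    rw [← Finset.mul_sum]
    have := AddChar.sum_mulShift k (ZMod.isPrimitive_stdAddChar N)
    simp only [hk, if_false, Nat.cast_zero] at this
    simp_rw [mul_comm k]
    rw [this, mul_zero]
  rw [h0]
  have h1 : ∑ j : ZMod N, φ (j - 1) * ZMod.stdAddChar (k * j)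
      = ZMod.stdAddChar k * dsum N φ k := by
    rw [← Equiv.sum_comp (Equiv.addRight (1 : ZMod N)), dsum, Finset.mul_sum]
    refine Finset.sum_congr rfl fun j _ => ?_
    simp only [Equiv.coe_addRight, add_sub_cancel_right, mul_add, mul_one, AddChar.map_add_eq_mul]
    ring
  rw [sub_mul, one_mul, ← h1, dsum, ← Finset.sum_sub_distrib]
  simp only [mul_zero, add_zero]
  rw [Finset.mul_sum]
  exact Finset.sum_congr rfl fun j _ => by ring

lemma gridPairing_mode_zero (N : ℕ) [NeZero N] (φ : ZMod N → ℂ) :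
    gridPairing N φ (gridSample N (mode (0 : ZMod N).valMinAbs)) = (1 / N) * dsum N φ 0 := by
  have hN : (N : ℂ) ≠ 0 := by exact_mod_cast NeZero.ne N
  unfold gridPairing
  simp_rw [gridSample_mode]
  have h1 : ∑ j : ZMod N, φ (j - 1) = ∑ j, φ j :=
    Equiv.sum_comp (Equiv.subRight (1 : ZMod N)) φ
  simp [dsum, Finset.sum_sub_distrib, h1, hN]

/-- On frequencies `|m| ≤ N/2` the symbol `1 - e^{2πim/N}` is comparable to `m/N`. -/
lemma le_norm_one_sub_stdAddChar (N : ℕ) [NeZero N] (k : ZMod N) :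
    4 * |(k.valMinAbs : ℝ)| / N ≤ ‖1 - (ZMod.stdAddChar k : ℂ)‖ := by
  have hN : (0 : ℝ) < N := by exact_mod_cast NeZero.pos N
  have h : (ZMod.stdAddChar k : ℂ)
      = Complex.exp (Complex.I * ((2 * Real.pi * k.valMinAbs / N : ℝ) : ℂ)) := by
    conv_lhs => rw [← ZMod.coe_valMinAbs k, ZMod.stdAddChar_coe]
    congr 1
    push_cast
    ring
  rw [norm_sub_rev, h, Complex.norm_exp_I_mul_ofReal_sub_one]
  have hm : |(k.valMinAbs : ℝ)| * 2 ≤ N := by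
    have := ZMod.natAbs_valMinAbs_le k
    have h2 : k.valMinAbs.natAbs * 2 ≤ N := by omega
    have h3 : |(k.valMinAbs : ℝ)| = (k.valMinAbs.natAbs : ℝ) := by
      rw [Nat.cast_natAbs, Int.cast_abs]
    rw [h3]
    exact_mod_cast h2
  have hx : |2 * Real.pi * k.valMinAbs / N / 2| = Real.pi * |(k.valMinAbs : ℝ)| / N := by
    rw [show 2 * Real.pi * k.valMinAbs / N / 2 = Real.pi * k.valMinAbs / N by ring,
      abs_div, abs_mul, abs_of_pos Real.pi_pos, abs_of_pos hN]
  have hle : |2 * Real.pi * k.valMinAbs / N / 2| ≤ Real.pi / 2 := by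
    rw [hx, div_le_div_iff₀ hN two_pos]
    nlinarith [Real.pi_pos]
  have := Real.mul_abs_le_abs_sin hle
  rw [hx] at this
  rw [Real.norm_eq_abs, abs_mul, abs_two]
  have h4 : 2 / Real.pi * (Real.pi * |(k.valMinAbs : ℝ)| / N) * 2 = 4 * |(k.valMinAbs : ℝ)| / N := by
    field_simp
    norm_num
    ring
  linarith

/-- The factor `|m|` in the symbol cancels the `H¹` weight, so each mode detects the Fourier sum
uniformly in `N`. -/
lemma dsum_le (N : ℕ) [NeZero N] (φ : ZMod N → ℂ) (k : ZMod N) :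
    ‖dsum N φ k‖ ^ 2 / (N : ℝ) ^ 2
      ≤ ‖gridPairing N φ (gridSample N (mode k.valMinAbs))‖ ^ 2 / modeWeight N k ^ 2 := by
  have hN : (0 : ℝ) < N := by exact_mod_cast NeZero.pos N
  rw [← div_pow, ← div_pow]
  refine pow_le_pow_left₀ (by positivity) ?_ 2
  rw [le_div_iff₀ (modeWeight_pos N k)]
  by_cases hk : k = 0
  · subst hk
    rw [gridPairing_mode_zero]
    simp [modeWeight]
    rw [inv_mul_eq_div]
  · rw [gridPairing_mode N φ k hk, norm_mul, Complex.norm_exp_ofReal_mul_I, one_mul, norm_mul]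
    have := le_norm_one_sub_stdAddChar N k
    simp only [modeWeight, hk, if_false]
    calc ‖dsum N φ k‖ / N * |(k.valMinAbs : ℝ)|
        = (1 * |(k.valMinAbs : ℝ)| / N) * ‖dsum N φ k‖ := by ring
      _ ≤ (4 * |(k.valMinAbs : ℝ)| / N) * ‖dsum N φ k‖ := by gcongr; norm_num
      _ ≤ _ := by gcongr

/-- Parseval's identity on `ℤ/N`. -/
lemma dsum_parseval (N : ℕ) [NeZero N] (φ : ZMod N → ℂ) :
    ∑ k, ‖dsum N φ k‖ ^ 2 = N * ∑ j, ‖φ j‖ ^ 2 := by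
  have key : ∑ k, dsum N φ k * (starRingEnd ℂ) (dsum N φ k)
      = N * ∑ j, φ j * (starRingEnd ℂ) (φ j) := by
    have hconj : ∀ x : ZMod N,
        (starRingEnd ℂ) (ZMod.stdAddChar x : ℂ) = ZMod.stdAddChar (-x) := fun x =>
      (AddChar.map_neg_eq_conj _ x).symm
    have h1 : ∀ k, dsum N φ k * (starRingEnd ℂ) (dsum N φ k)
        = ∑ i, ∑ j, φ i * (starRingEnd ℂ) (φ j) * ZMod.stdAddChar (k * (i - j)) := by
      intro k
      unfold dsum
      rw [map_sum, Finset.sum_mul_sum]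
      refine Finset.sum_congr rfl fun i _ => Finset.sum_congr rfl fun j _ => ?_
      rw [map_mul (starRingEnd ℂ), hconj, mul_sub, sub_eq_add_neg, AddChar.map_add_eq_mul]
      ring
    simp_rw [h1]
    rw [Finset.sum_comm, Finset.mul_sum]
    refine Finset.sum_congr rfl fun i _ => ?_
    rw [Finset.sum_comm]
    simp_rw [← Finset.mul_sum, AddChar.sum_mulShift _ (ZMod.isPrimitive_stdAddChar N)]
    simp [sub_eq_zero, mul_comm]
  simp_rw [Complex.mul_conj'] at key
  exact_mod_cast key

/-- Testing against the Riesz representer of the functional, restricted to frequencies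
`|m| ≤ N/2`, yields a value at least `‖φ_h‖₀`. -/
lemma exists_test (N : ℕ) [NeZero N] (φ : ZMod N → ℂ) :
    ∃ u : ℝ → ℂ, ContDiff ℝ (⊤ : ℕ∞) u ∧ Function.Periodic u 1 ∧ sobNorm 1 u ≤ 1 ∧
      Real.sqrt ((1 / (N : ℝ)) * ∑ j : ZMod N, ‖φ j‖ ^ 2)
        ≤ ‖gridPairing N φ (gridSample N u)‖ := by
  have hN : (0 : ℝ) < N := by exact_mod_cast NeZero.pos N
  set G : ZMod N → ℂ := fun k => gridPairing N φ (gridSample N (mode k.valMinAbs)) with hG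
  set T : ℝ := ∑ k, ‖G k‖ ^ 2 / modeWeight N k ^ 2 with hT
  have hT0 : 0 ≤ T := Finset.sum_nonneg fun k _ => by positivity
  have hle : (1 / (N : ℝ)) * ∑ j : ZMod N, ‖φ j‖ ^ 2 ≤ T := by
    calc (1 / (N : ℝ)) * ∑ j : ZMod N, ‖φ j‖ ^ 2
        = ∑ k, ‖dsum N φ k‖ ^ 2 / (N : ℝ) ^ 2 := by
          rw [← Finset.sum_div, dsum_parseval]
          field_simp
      _ ≤ T := Finset.sum_le_sum fun k _ => dsum_le N φ k
  set S := Real.sqrt T with hS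
  have hS2 : S ^ 2 = T := Real.sq_sqrt hT0
  -- If `T = 0` then `S⁻¹ = 0` and the test function vanishes, which is still admissible.
  set a : ZMod N → ℂ :=
    fun k => (starRingEnd ℂ) (G k) * (((modeWeight N k ^ 2)⁻¹ * S⁻¹ : ℝ) : ℂ) with ha
  refine ⟨trigPoly N a, trigPoly_contDiff N a, trigPoly_periodic N a, ?_, ?_⟩
  · rw [sobNorm_trigPoly]
    refine Real.sqrt_le_one.2 ?_
    have : ∑ k, modeWeight N k ^ 2 * ‖a k‖ ^ 2 = T * (S⁻¹) ^ 2 := by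
      rw [hT, Finset.sum_mul]
      refine Finset.sum_congr rfl fun k _ => ?_
      have hw := (modeWeight_pos N k).ne'
      rw [ha]
      simp only [norm_mul, RCLike.norm_conj, Complex.norm_real, Real.norm_eq_abs, mul_pow, sq_abs]
      field_simp
    rw [this, ← hS2, ← mul_pow]
    by_cases h : S = 0
    · simp [h]
    · simp [h]
  · refine (Real.sqrt_le_sqrt hle).trans ?_
    have : gridPairing N φ (gridSample N (trigPoly N a)) = ((T * S⁻¹ : ℝ) : ℂ) := by
      rw [gridPairing_trigPoly, hT, Finset.sum_mul]
      push_cast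
      refine Finset.sum_congr rfl fun k _ => ?_
      rw [ha, div_eq_mul_inv, ← Complex.mul_conj']
      push_cast
      ring
    rw [← hS, this, Complex.norm_real, ← hS2]
    by_cases h : S = 0
    · simp [h]
    · rw [show S ^ 2 * S⁻¹ = S by field_simp]
      exact le_abs_self S

/-! ### Upper bound for the dual norm -/

lemma fc_eq_fourierCoeffOn (u : ℝ → ℂ) (m : ℤ) :
    fc u m = fourierCoeffOn (zero_lt_one' ℝ) u m := by
  rw [fourierCoeffOn_eq_integral, fc]
  simp only [sub_zero, div_one, one_smul]
  refine intervalIntegral.integral_congr fun t _ => ?_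
  simp only [smul_eq_mul]
  rw [fourier_coe_apply, mul_comm]
  congr 2
  push_cast
  ring

lemma fc_deriv (u : ℝ → ℂ) (hu : ContDiff ℝ (⊤ : ℕ∞) u) (hp : Function.Periodic u 1) (m : ℤ) :
    fc (deriv u) m = 2 * Real.pi * Complex.I * m * fc u m := by
  have hd : ∀ x, HasDerivAt u (deriv u x) x := fun x =>
    (hu.differentiable (by simp) x).hasDerivAt
  have hc : Continuous (deriv u) := hu.continuous_deriv (by simp)
  have h01 : u 1 = u 0 := by simpa using hp 0
  by_cases hm : m = 0
  · subst hm
    simp only [fc, Int.cast_zero, mul_zero, zero_mul, neg_zero, Complex.exp_zero, mul_one]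
    rw [intervalIntegral.integral_eq_sub_of_hasDerivAt (fun x _ => hd x)
      (hc.intervalIntegrable _ _), h01, sub_self]
  · rw [fc_eq_fourierCoeffOn u, fc_eq_fourierCoeffOn (deriv u),
      fourierCoeffOn_of_hasDerivAt (zero_lt_one' ℝ) hm (fun x _ => hd x)
        (hc.intervalIntegrable _ _), h01]
    have hm' : (m : ℂ) ≠ 0 := by exact_mod_cast hm
    have hpi : (Real.pi : ℂ) ≠ 0 := by exact_mod_cast Real.pi_ne_zero
    have hI := Complex.I_ne_zero
    simp only [sub_self, mul_zero, zero_sub]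
    field_simp
    simp

lemma sobNorm_bounds (u : ℝ → ℂ) (hu : ContDiff ℝ (⊤ : ℕ∞) u) (hp : Function.Periodic u 1) :
    ‖fc u 0‖ ≤ sobNorm 1 u ∧
      ∫ t in (0:ℝ)..1, ‖deriv u t‖ ^ 2 ≤ (2 * Real.pi * sobNorm 1 u) ^ 2 := by
  have hc : Continuous (deriv u) := hu.continuous_deriv (by simp)
  have hL2 : MeasureTheory.MemLp (deriv u) 2
      (MeasureTheory.volume.restrict (Set.Ioc (0:ℝ) 1)) := by
    obtain ⟨C, hC⟩ := (isCompact_Icc (a := (0:ℝ)) (b := 1)).exists_bound_of_continuousOn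
      hc.continuousOn
    exact MeasureTheory.MemLp.of_bound hc.aestronglyMeasurable C
      ((MeasureTheory.ae_restrict_mem measurableSet_Ioc).mono fun x hx =>
        hC x (Set.Ioc_subset_Icc_self hx))
  have hs := hasSum_sq_fourierCoeffOn (zero_lt_one' ℝ) hL2
  simp_rw [← fc_eq_fourierCoeffOn, fc_deriv u hu hp] at hs
  simp only [sub_zero, inv_one, one_smul] at hs
  have hterm : ∀ m : ℤ, ‖2 * Real.pi * Complex.I * m * fc u m‖ ^ 2
      = (2 * Real.pi) ^ 2 *
        (if m = 0 then 0 else |(m : ℝ)| ^ (2 * (1:ℝ)) * ‖fc u m‖ ^ 2) := by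
    intro m
    split_ifs with h
    · simp [h]
    · simp only [norm_mul, Complex.norm_I, Complex.norm_real, Complex.norm_intCast,
        Real.norm_eq_abs, abs_of_pos Real.pi_pos, mul_one, mul_pow]
      norm_num
      ring
  simp_rw [hterm] at hs
  have hnn : 0 ≤ ∑' m : ℤ, (if m = 0 then 0 else |(m : ℝ)| ^ (2 * (1:ℝ)) * ‖fc u m‖ ^ 2) :=
    tsum_nonneg fun m => by split_ifs <;> positivity
  have ht := hs.tsum_eq
  rw [tsum_mul_left] at ht
  constructor
  · unfold sobNorm
    exact Real.le_sqrt_of_sq_le (by linarith)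
  · rw [← ht, mul_pow _ (sobNorm 1 u)]
    refine mul_le_mul_of_nonneg_left ?_ (by positivity)
    unfold sobNorm
    rw [Real.sq_sqrt (by positivity)]
    linarith [sq_nonneg ‖fc u 0‖]

/-- Cauchy–Schwarz for the increment of `u`. -/
lemma norm_sub_sq_le (u : ℝ → ℂ) (hu : ContDiff ℝ (⊤ : ℕ∞) u) (a b : ℝ) (hab : a ≤ b) :
    ‖u b - u a‖ ^ 2 ≤ (b - a) * ∫ t in a..b, ‖deriv u t‖ ^ 2 := by
  rcases hab.eq_or_lt with rfl | hlt
  · simp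
  have hc : Continuous (deriv u) := hu.continuous_deriv (by simp)
  have h1 : ‖u b - u a‖ ≤ ∫ t in a..b, ‖deriv u t‖ := by
    rw [← intervalIntegral.integral_deriv_eq_sub (fun x _ => hu.differentiable (by simp) x)
      (hc.intervalIntegrable _ _)]
    exact intervalIntegral.norm_integral_le_integral_norm hab
  set J := ∫ t in a..b, ‖deriv u t‖ with hJ
  set L := J / (b - a) with hL
  have hba : 0 < b - a := sub_pos.2 hlt
  have hsq : 0 ≤ ∫ t in a..b, (‖deriv u t‖ - L) ^ 2 :=
    intervalIntegral.integral_nonneg hab fun t _ => sq_nonneg _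
  have hexp : ∫ t in a..b, (‖deriv u t‖ - L) ^ 2
      = (∫ t in a..b, ‖deriv u t‖ ^ 2) - 2 * L * J + (b - a) * L ^ 2 := by
    have : ∀ t, (‖deriv u t‖ - L) ^ 2 = ‖deriv u t‖ ^ 2 - 2 * L * ‖deriv u t‖ + L ^ 2 :=
      fun t => by ring
    simp_rw [this]
    rw [intervalIntegral.integral_add, intervalIntegral.integral_sub,
      intervalIntegral.integral_const_mul, intervalIntegral.integral_const, smul_eq_mul]
    all_goals exact Continuous.intervalIntegrable (by fun_prop) _ _
  have hJL : J = L * (b - a) := by rw [hL]; field_simp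
  have h2 : J ^ 2 ≤ (b - a) * ∫ t in a..b, ‖deriv u t‖ ^ 2 := by
    have : (b - a) * L ^ 2 ≤ ∫ t in a..b, ‖deriv u t‖ ^ 2 := by
      rw [hexp, hJL] at hsq
      linarith
    calc J ^ 2 = (b - a) * ((b - a) * L ^ 2) := by rw [hJL]; ring
      _ ≤ _ := by gcongr
  exact (pow_le_pow_left₀ (norm_nonneg _) h1 2).trans h2

lemma deriv_periodic (u : ℝ → ℂ) (hp : Function.Periodic u 1) :
    Function.Periodic (fun t => ‖deriv u t‖ ^ 2) 1 := by
  intro t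
  have : deriv u (t + 1) = deriv u t := by
    rw [← deriv_comp_add_const]
    congr 1
    exact funext hp
  simp only [this]

/-- Sobolev embedding: `u(s)` differs from the mean of `u` by at most `‖Du‖₀`, `D` the derivative. -/
lemma sup_bound (u : ℝ → ℂ) (hu : ContDiff ℝ (⊤ : ℕ∞) u) (hp : Function.Periodic u 1) (s : ℝ) :
    ‖u s‖ ≤ (1 + 2 * Real.pi) * sobNorm 1 u := by
  obtain ⟨h0, hD⟩ := sobNorm_bounds u hu hp
  have hs0 : 0 ≤ sobNorm 1 u := Real.sqrt_nonneg _
  have hc : Continuous (deriv u) := hu.continuous_deriv (by simp)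
  have hpt : ∀ t ∈ Set.uIoc s (s + 1), ‖u s - u t‖ ≤ 2 * Real.pi * sobNorm 1 u := by
    intro t ht
    rw [Set.uIoc_of_le (by linarith)] at ht
    refine abs_le_of_sq_le_sq' ?_ (by positivity) |>.2
    rw [norm_sub_rev]
    refine (norm_sub_sq_le u hu s t ht.1.le).trans (le_trans ?_ hD)
    have hper : ∫ x in s..(s + 1), ‖deriv u x‖ ^ 2 = ∫ x in (0:ℝ)..1, ‖deriv u x‖ ^ 2 := by
      have := (deriv_periodic u hp).intervalIntegral_add_eq s 0
      simpa using this
    rw [← hper]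
    have hmono : ∫ x in s..t, ‖deriv u x‖ ^ 2 ≤ ∫ x in s..(s + 1), ‖deriv u x‖ ^ 2 :=
      intervalIntegral.integral_mono_interval le_rfl ht.1.le ht.2
        (Filter.Eventually.of_forall fun x => by positivity)
        (Continuous.intervalIntegrable (by fun_prop) _ _)
    have hnn : 0 ≤ ∫ x in s..t, ‖deriv u x‖ ^ 2 :=
      intervalIntegral.integral_nonneg ht.1.le fun x _ => by positivity
    nlinarith [ht.1, ht.2]
  have hcu := hu.continuous
  have hmean : ∫ t in s..(s + 1), u t = fc u 0 := by
    have := hp.intervalIntegral_add_eq s 0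
    simpa [fc] using this
  have hid : u s = (∫ t in s..(s + 1), (u s - u t)) + fc u 0 := by
    rw [intervalIntegral.integral_sub (by simp) (hcu.intervalIntegrable _ _), hmean]
    simp
  rw [hid]
  refine (norm_add_le _ _).trans ?_
  have := intervalIntegral.norm_integral_le_of_norm_le_const hpt
  simp only [add_sub_cancel_left, abs_one, mul_one] at this
  linarith

lemma gridSample_add_one (N : ℕ) [NeZero N] (u : ℝ → ℂ) (hp : Function.Periodic u 1)
    (j : ZMod N) :
    gridSample N u (j + 1) = u (sg (1 / (N : ℝ)) 0 ((j.val + 1 : ℕ) : ℤ)) := by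
  have hN : (N : ℝ) ≠ 0 := by exact_mod_cast NeZero.ne N
  have h : (((j + 1).val : ℤ) : ZMod N) = ((j.val + 1 : ℕ) : ℤ) := by simp
  obtain ⟨n, hn⟩ := (ZMod.intCast_eq_intCast_iff_dvd_sub _ _ _).1 h
  unfold gridSample
  have : sg (1 / (N : ℝ)) 0 ((j.val + 1 : ℕ) : ℤ)
      = sg (1 / (N : ℝ)) 0 (((j + 1).val : ℕ) : ℤ) + n * 1 := by
    rw [sub_eq_iff_eq_add.1 hn]
    unfold sg
    push_cast
    field_simp
    ring
  rw [this]
  exact ((hp.int_mul n) _).symm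

lemma sum_increments_le (N : ℕ) [NeZero N] (u : ℝ → ℂ) (hu : ContDiff ℝ (⊤ : ℕ∞) u)
    (hp : Function.Periodic u 1) :
    ∑ j : ZMod N, ‖gridSample N u (j + 1) - gridSample N u j‖ ^ 2
      ≤ (1 / (N : ℝ)) * (2 * Real.pi * sobNorm 1 u) ^ 2 := by
  have hN : (0 : ℝ) < N := by exact_mod_cast NeZero.pos N
  have hc : Continuous (deriv u) := hu.continuous_deriv (by simp)
  set p : ℕ → ℝ := fun n => sg (1 / (N : ℝ)) 0 (n : ℤ) with hpdef
  have hstep : ∀ n, p (n + 1) - p n = 1 / N := fun n => by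
    simp only [hpdef, sg]; push_cast; ring
  have hend : p N = p 0 + 1 := by
    simp only [hpdef, sg]; push_cast; field_simp; ring
  have hsum : ∑ j : ZMod N, ∫ t in (p j.val)..(p (j.val + 1)), ‖deriv u t‖ ^ 2
      = ∫ t in (0:ℝ)..1, ‖deriv u t‖ ^ 2 := by
    have h1 : ∑ j : ZMod N, ∫ t in (p j.val)..(p (j.val + 1)), ‖deriv u t‖ ^ 2
        = ∑ n ∈ Finset.range N, ∫ t in (p n)..(p (n + 1)), ‖deriv u t‖ ^ 2 := by
      refine Finset.sum_bij (fun j _ => j.val) (fun j _ => Finset.mem_range.2 j.val_lt)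
        (fun i _ j _ h => ZMod.val_injective N h)
        (fun n hn => ⟨(n : ZMod N), Finset.mem_univ _,
          ZMod.val_natCast_of_lt (Finset.mem_range.1 hn)⟩) (fun j _ => rfl)
    rw [h1, intervalIntegral.sum_integral_adjacent_intervals
      (fun k _ => Continuous.intervalIntegrable (by fun_prop) _ _), hend]
    simpa using (deriv_periodic u hp).intervalIntegral_add_eq (p 0) 0
  calc ∑ j : ZMod N, ‖gridSample N u (j + 1) - gridSample N u j‖ ^ 2
      ≤ ∑ j : ZMod N, (1 / (N : ℝ)) * ∫ t in (p j.val)..(p (j.val + 1)), ‖deriv u t‖ ^ 2 := by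
        refine Finset.sum_le_sum fun j _ => ?_
        have hj := hstep j.val
        have hpos : 0 < 1 / (N : ℝ) := by positivity
        have hcs := norm_sub_sq_le u hu (p j.val) (p (j.val + 1)) (by linarith)
        rw [hj] at hcs
        rw [gridSample_add_one N u hp]
        exact hcs
    _ = (1 / (N : ℝ)) * ∫ t in (0:ℝ)..1, ‖deriv u t‖ ^ 2 := by rw [← Finset.mul_sum, hsum]
    _ ≤ _ := by gcongr; exact (sobNorm_bounds u hu hp).2

lemma gridPairing_le (N : ℕ) [NeZero N] (φ : ZMod N → ℂ) (u : ℝ → ℂ)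
    (hu : ContDiff ℝ (⊤ : ℕ∞) u) (hp : Function.Periodic u 1) (h1 : sobNorm 1 u ≤ 1) :
    ‖gridPairing N φ (gridSample N u)‖
      ≤ (4 * Real.pi + 1) * Real.sqrt ((1 / (N : ℝ)) * ∑ j : ZMod N, ‖φ j‖ ^ 2) := by
  have hN : (0 : ℝ) < N := by exact_mod_cast NeZero.pos N
  have hpi := Real.pi_pos
  have hs0 : 0 ≤ sobNorm 1 u := Real.sqrt_nonneg _
  set R := Real.sqrt ((1 / (N : ℝ)) * ∑ j : ZMod N, ‖φ j‖ ^ 2) with hR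
  have hR0 : 0 ≤ R := Real.sqrt_nonneg _
  have hR2 : R ^ 2 = (1 / (N : ℝ)) * ∑ j : ZMod N, ‖φ j‖ ^ 2 := Real.sq_sqrt (by positivity)
  set v := gridSample N u with hv
  have hparts : ∑ j : ZMod N, (φ j - φ (j - 1)) * v j
      = -∑ j : ZMod N, φ j * (v (j + 1) - v j) := by
    have : ∑ j : ZMod N, φ (j - 1) * v j = ∑ j : ZMod N, φ j * v (j + 1) := by
      rw [← Equiv.sum_comp (Equiv.addRight (1 : ZMod N))]
      simp
    simp_rw [sub_mul, mul_sub, Finset.sum_sub_distrib]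
    rw [this]
    ring
  have hA : ‖∑ j : ZMod N, (φ j - φ (j - 1)) * v j‖ ≤ 2 * Real.pi * R := by
    rw [hparts, norm_neg]
    refine (norm_sum_le _ _).trans ?_
    simp_rw [norm_mul]
    refine abs_le_of_sq_le_sq' ?_ (by positivity) |>.2
    refine (Finset.sum_mul_sq_le_sq_mul_sq _ _ _).trans ?_
    have hinc := sum_increments_le N u hu hp
    calc (∑ j, ‖φ j‖ ^ 2) * ∑ j, ‖v (j + 1) - v j‖ ^ 2
        ≤ (∑ j, ‖φ j‖ ^ 2) * ((1 / (N : ℝ)) * (2 * Real.pi * sobNorm 1 u) ^ 2) := by gcongr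
      _ ≤ (∑ j, ‖φ j‖ ^ 2) * ((1 / (N : ℝ)) * (2 * Real.pi * 1) ^ 2) := by gcongr
      _ = (2 * Real.pi * R) ^ 2 := by rw [mul_pow _ R, hR2]; ring
  have hB : ‖(1 / (N : ℂ)) * ∑ j : ZMod N, φ j‖ ≤ R := by
    refine abs_le_of_sq_le_sq' ?_ hR0 |>.2
    rw [hR2, norm_mul, mul_pow]
    have hcs : (∑ j : ZMod N, ‖φ j‖) ^ 2 ≤ N * ∑ j, ‖φ j‖ ^ 2 := by
      simpa using sq_sum_le_card_mul_sum_sq (s := Finset.univ) (f := fun j : ZMod N => ‖φ j‖)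
    have hle : ‖∑ j : ZMod N, φ j‖ ^ 2 ≤ N * ∑ j, ‖φ j‖ ^ 2 :=
      (pow_le_pow_left₀ (norm_nonneg _) (norm_sum_le _ _) 2).trans hcs
    calc ‖(1 / (N : ℂ))‖ ^ 2 * ‖∑ j : ZMod N, φ j‖ ^ 2
        ≤ ‖(1 / (N : ℂ))‖ ^ 2 * (N * ∑ j, ‖φ j‖ ^ 2) := by gcongr
      _ = _ := by simp; field_simp
  have hC : ‖(1 / (N : ℂ)) * ∑ j : ZMod N, v j‖ ≤ 1 + 2 * Real.pi := by
    have hle : ‖∑ j : ZMod N, v j‖ ≤ N * (1 + 2 * Real.pi) := by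
      refine (norm_sum_le_of_le _ (f := v) (n := fun _ => 1 + 2 * Real.pi) fun j _ => ?_).trans ?_
      · refine (sup_bound u hu hp _).trans ?_
        nlinarith
      · simp [mul_add]
    rw [norm_mul]
    calc ‖(1 / (N : ℂ))‖ * ‖∑ j : ZMod N, v j‖ ≤ ‖(1 / (N : ℂ))‖ * (N * (1 + 2 * Real.pi)) := by
          gcongr
      _ = _ := by simp; field_simp
  unfold gridPairing
  refine (norm_add_le _ _).trans ?_
  rw [norm_mul (_ * _)]
  have := mul_le_mul hB hC (norm_nonneg _) hR0
  linarith

end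

/-- equivalence of `‖φ_h‖₀` with the `H^{−1}` norm of
`φ_h′ + φ̂_h(0) d_h`, expressed as a supremum over smooth 1-periodic test functions
with `‖u‖₁ ≤ 1`, with absolute constants `c₁, c₂`. -/
theorem stmt_8 :
    ∃ c1 > (0:ℝ), ∃ c2 > (0:ℝ), ∀ (N : ℕ) [NeZero N], ∀ φv : ZMod N → ℂ,
      c1 * sSup {r : ℝ | ∃ u : ℝ → ℂ, ContDiff ℝ (⊤ : ℕ∞) u ∧ Function.Periodic u 1 ∧
            sobNorm 1 u ≤ 1 ∧
            r = ‖(∑ j : ZMod N, (φv j - φv (j - 1)) * u (sg (1 / (N : ℝ)) 0 ((j.val : ℕ) : ℤ)))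
                  + ((1 / (N : ℂ)) * ∑ j : ZMod N, φv j) * ((1 / (N : ℂ))
                      * ∑ j : ZMod N, u (sg (1 / (N : ℝ)) 0 ((j.val : ℕ) : ℤ)))‖} ≤
        Real.sqrt ((1 / (N : ℝ)) * ∑ j : ZMod N, ‖φv j‖ ^ 2) ∧
      Real.sqrt ((1 / (N : ℝ)) * ∑ j : ZMod N, ‖φv j‖ ^ 2) ≤
        c2 * sSup {r : ℝ | ∃ u : ℝ → ℂ, ContDiff ℝ (⊤ : ℕ∞) u ∧ Function.Periodic u 1 ∧
            sobNorm 1 u ≤ 1 ∧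
            r = ‖(∑ j : ZMod N, (φv j - φv (j - 1)) * u (sg (1 / (N : ℝ)) 0 ((j.val : ℕ) : ℤ)))
                  + ((1 / (N : ℂ)) * ∑ j : ZMod N, φv j) * ((1 / (N : ℂ))
                      * ∑ j : ZMod N, u (sg (1 / (N : ℝ)) 0 ((j.val : ℕ) : ℤ)))‖} := by
  have hpi := Real.pi_pos
  refine ⟨(4 * Real.pi + 1)⁻¹, by positivity, 1, one_pos, fun N _ φv => ⟨?_, ?_⟩⟩
  · rw [inv_mul_le_iff₀ (by positivity)]
    refine Real.sSup_le ?_ (by positivity)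
    rintro r ⟨u, hu, hp, h1, rfl⟩
    exact gridPairing_le N φv u hu hp h1
  · rw [one_mul]
    obtain ⟨u, hu, hp, h1, hle⟩ := exists_test N φv
    refine hle.trans (le_csSup ?_ ⟨u, hu, hp, h1, rfl⟩)
    refine ⟨(4 * Real.pi + 1) * Real.sqrt ((1 / (N : ℝ)) * ∑ j : ZMod N, ‖φv j‖ ^ 2), ?_⟩
    rintro r ⟨w, hw, hwp, hw1, rfl⟩
    exact gridPairing_le N φv w hw hwp hw1
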